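/- Let q be a power of 2 and let n be an integer with 3 ≤ n ≤ q. Then for every integer m with 0 ≤ m ≤ n/2 there exists an [n, n−2m] LCD MDS code over F_q. -/

import Mathlib

/-!
The code is a generalized Reed–Solomon code: the vectors `(dᵢ p(aᵢ))ᵢ` for `deg p < k`, with
distinct `aᵢ` and nonzero multipliers `dᵢ`. It is MDS of dimension `k` for every choice of the
`dᵢ`, and it is LCD exactly when the weighted form `B_t(x, y) = ∑ tᵢ xᵢ yᵢ` with `tᵢ = dᵢ²` is
nondegenerate on the Reed–Solomon code `(p(aᵢ))ᵢ`. Every element of a finite field of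
characteristic `2` is a square, so it suffices to find nonzero weights `t` with `B_t` nondegenerate.

Taking for `t` the indicator of `k` coordinates works except that some weights vanish, since those
coordinates determine the polynomial by interpolation. A zero weight can be replaced by a nonzero
one without losing nondegeneracy (`WeightedNondeg.exists_update`): of two distinct nonzero values
`s₁, s₂` at least one works. If neither did, there would be radical vectors `x₁, x₂` normalized to
`1` at the coordinate in question, giving `B_t(x₁, x₂) = -s₁` and `B_t(x₂, x₁) = -s₂`, against
symmetry. As `n ≥ 3` forces `q ≥ 4`, two distinct nonzero values exist.
-/

/-- `C` is an `[n, k]` LCD MDS code over the field `F`: it is a `k`-dimensional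
linear subspace of `F^n`, it intersects its Euclidean dual trivially, and every
nonzero codeword has Hamming weight at least `n - k + 1`. -/
def IsLCDMDSCode {F : Type} [Field F] [DecidableEq F] {n : ℕ} (k : ℕ)
    (C : Submodule F (Fin n → F)) : Prop :=
  Module.finrank F C = k ∧
  (∀ x ∈ C, (∀ c ∈ C, ∑ i, x i * c i = 0) → x = 0) ∧
  (∀ x ∈ C, x ≠ 0 → n - k + 1 ≤ (Finset.univ.filter fun i => x i ≠ 0).card)

/-- The bilinear form `∑ tᵢ xᵢ yᵢ` restricted to `C` has trivial radical. -/
def WeightedNondeg {F : Type} [Field F] {n : ℕ} (C : Submodule F (Fin n → F))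
    (t : Fin n → F) : Prop :=
  ∀ x ∈ C, (∀ c ∈ C, ∑ i, t i * (x i * c i) = 0) → x = 0

lemma sum_update_weight {F : Type} [Field F] {n : ℕ} (t : Fin n → F) (j : Fin n)
    (hj : t j = 0) (s : F) (y : Fin n → F) :
    ∑ i, Function.update t j s i * y i = ∑ i, t i * y i + s * y j := by
  rw [← Finset.add_sum_erase _ _ (Finset.mem_univ j),
    ← Finset.add_sum_erase _ (fun i => t i * y i) (Finset.mem_univ j)]
  have : ∑ i ∈ Finset.univ.erase j, Function.update t j s i * y i
      = ∑ i ∈ Finset.univ.erase j, t i * y i := by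
    refine Finset.sum_congr rfl fun i hi => ?_
    rw [Function.update_of_ne (Finset.ne_of_mem_erase hi)]
  rw [this]
  simp [hj]
  ring

/-- If giving weight `s` to the weightless coordinate `j` makes the form degenerate, the radical
contains a vector normalized to `1` at `j`. -/
lemma WeightedNondeg.exists_radical {F : Type} [Field F] {n : ℕ} {C : Submodule F (Fin n → F)}
    {t : Fin n → F} (ht : WeightedNondeg C t) {j : Fin n} (hj : t j = 0) {s : F}
    (hs : ¬ WeightedNondeg C (Function.update t j s)) :
    ∃ x ∈ C, x j = 1 ∧ ∀ c ∈ C, ∑ i, t i * (x i * c i) = -(s * c j) := by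
  unfold WeightedNondeg at hs
  push Not at hs
  obtain ⟨x, hxC, hx, hx0⟩ := hs
  have hx' : ∀ c ∈ C, ∑ i, t i * (x i * c i) + s * (x j * c j) = 0 := fun c hc => by
    rw [← sum_update_weight t j hj s (fun i => x i * c i)]
    exact hx c hc
  have hxj : x j ≠ 0 := by
    intro h
    refine hx0 (ht x hxC fun c hc => ?_)
    simpa [h] using hx' c hc
  refine ⟨(x j)⁻¹ • x, C.smul_mem _ hxC, by simp [hxj], fun c hc => ?_⟩
  have h1 : ∑ i, t i * (((x j)⁻¹ • x) i * c i) = (x j)⁻¹ * ∑ i, t i * (x i * c i) := by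
    rw [Finset.mul_sum]
    refine Finset.sum_congr rfl fun i _ => ?_
    simp only [Pi.smul_apply, smul_eq_mul]
    ring
  rw [h1, eq_neg_of_add_eq_zero_left (hx' c hc)]
  field_simp

lemma WeightedNondeg.exists_update {F : Type} [Field F] {n : ℕ} {C : Submodule F (Fin n → F)}
    {t : Fin n → F} (ht : WeightedNondeg C t) {j : Fin n} (hj : t j = 0) {s₁ s₂ : F}
    (h₁ : s₁ ≠ 0) (h₂ : s₂ ≠ 0) (h₁₂ : s₁ ≠ s₂) :
    ∃ s, s ≠ 0 ∧ WeightedNondeg C (Function.update t j s) := by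
  by_contra! hcon
  obtain ⟨x, hxC, hxj, hx⟩ := ht.exists_radical hj (hcon s₁ h₁)
  obtain ⟨y, hyC, hyj, hy⟩ := ht.exists_radical hj (hcon s₂ h₂)
  have e₁ := hx y hyC
  have e₂ := hy x hxC
  simp only [hxj, hyj, mul_one] at e₁ e₂
  refine h₁₂ (neg_injective ?_)
  rw [← e₁, ← e₂]
  exact Finset.sum_congr rfl fun i _ => by ring

lemma WeightedNondeg.exists_ne_zero {F : Type} [Field F] {n : ℕ} {C : Submodule F (Fin n → F)}
    {t : Fin n → F} (ht : WeightedNondeg C t) {s₁ s₂ : F}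
    (h₁ : s₁ ≠ 0) (h₂ : s₂ ≠ 0) (h₁₂ : s₁ ≠ s₂) :
    ∃ u : Fin n → F, (∀ i, u i ≠ 0) ∧ WeightedNondeg C u := by
  suffices h : ∀ T : Finset (Fin n), ∃ u : Fin n → F,
      (∀ i ∈ T, u i ≠ 0) ∧ WeightedNondeg C u by
    obtain ⟨u, hu, hC⟩ := h Finset.univ
    exact ⟨u, fun i => hu i (Finset.mem_univ i), hC⟩
  intro T
  induction T using Finset.induction_on with
  | empty => exact ⟨t, by simp, ht⟩
  | insert j T _ ih =>
    obtain ⟨u, hu, hC⟩ := ih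
    by_cases hj : u j = 0
    · obtain ⟨s, hs, hC'⟩ := hC.exists_update hj h₁ h₂ h₁₂
      refine ⟨_, fun i hi => ?_, hC'⟩
      by_cases hij : i = j
      · subst hij
        simpa using hs
      · rw [Function.update_of_ne hij]
        exact hu i (Finset.mem_of_mem_insert_of_ne hi hij)
    · refine ⟨u, fun i hi => ?_, hC⟩
      rcases Finset.mem_insert.1 hi with rfl | h
      · exact hj
      · exact hu i h

open Polynomial in
/-- The map `p ↦ (dᵢ p(aᵢ))ᵢ`, whose image of the polynomials of degree `< k` is the
generalized Reed–Solomon code with evaluation points `a` and multipliers `d`. -/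
noncomputable def grsMap {F : Type} [Field F] {n : ℕ} (a d : Fin n → F) :
    F[X] →ₗ[F] (Fin n → F) :=
  LinearMap.pi fun i => d i • Polynomial.leval (a i)

open Polynomial in
lemma grsMap_apply {F : Type} [Field F] {n : ℕ} (a d : Fin n → F) (p : F[X]) (i : Fin n) :
    grsMap a d p i = d i * p.eval (a i) := by
  simp [grsMap, Polynomial.leval]

open Polynomial in
/-- A nonzero polynomial of degree `< k` vanishes at fewer than `k` of the points `aᵢ`. -/
lemma card_zeros_lt {F : Type} [Field F] [DecidableEq F] {n k : ℕ} {a : Fin n → F}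
    (ha : Function.Injective a) {p : F[X]} (hp : p ∈ degreeLT F k) (hp0 : p ≠ 0) :
    (Finset.univ.filter fun i => p.eval (a i) = 0).card < k := by
  by_contra! h
  refine hp0 (Polynomial.eq_zero_of_degree_lt_of_eval_index_eq_zero
    (s := Finset.univ.filter fun i => p.eval (a i) = 0) (v := a) ha.injOn ?_ ?_)
  · exact lt_of_lt_of_le (mem_degreeLT.1 hp) (by exact_mod_cast h)
  · intro i hi
    exact (Finset.mem_filter.1 hi).2

/-- The first `k` coordinates form an information set of the Reed–Solomon code, so their indicator
is a nondegenerate weight. -/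
lemma weightedNondeg_indicator {F : Type} [Field F] [DecidableEq F] {n k : ℕ} (hk : k ≤ n)
    {a : Fin n → F} (ha : Function.Injective a) :
    WeightedNondeg ((Polynomial.degreeLT F k).map (grsMap a 1))
      (fun i => if (i : ℕ) < k then 1 else 0) := by
  have hcard : (Finset.univ.filter fun i : Fin n => (i : ℕ) < k).card = k := by
    rw [Fin.card_filter_val_lt]
    omega
  rintro _ ⟨p, hp, rfl⟩ h
  by_contra hne
  have hp0 : p ≠ 0 := fun h0 => hne (by rw [h0, map_zero])
  have hlt := card_zeros_lt ha hp hp0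
  refine absurd hlt (not_lt.2 ?_)
  refine hcard.symm.le.trans (Finset.card_le_card fun j hj => ?_)
  have hjk := (Finset.mem_filter.1 hj).2
  -- Test against the Lagrange basis polynomial of the node `j`.
  have hmem : grsMap a 1 (Lagrange.interpolate
      (Finset.univ.filter fun i : Fin n => (i : ℕ) < k) a (Pi.single j 1)) ∈
      (Polynomial.degreeLT F k).map (grsMap a 1) := by
    refine ⟨_, Polynomial.mem_degreeLT.2 ?_, rfl⟩
    have := Lagrange.degree_interpolate_lt (s := Finset.univ.filter fun i : Fin n => (i : ℕ) < k)
      (v := a) (Pi.single j 1) ha.injOn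
    rwa [hcard] at this
  have h1 := h _ hmem
  rw [Finset.sum_eq_single j] at h1
  · beta_reduce at h1
    rw [if_pos hjk, grsMap_apply, grsMap_apply,
      Lagrange.eval_interpolate_at_node _ ha.injOn hj] at h1
    simpa using h1
  · intro i _ hij
    by_cases hik : (i : ℕ) < k
    · rw [grsMap_apply _ _ (Lagrange.interpolate _ _ _),
        Lagrange.eval_interpolate_at_node _ ha.injOn (Finset.mem_filter.2 ⟨Finset.mem_univ i, hik⟩)]
      simp [hij]
    · simp [hik]
  · simp

/-- A generalized Reed–Solomon code is LCD MDS once the squares of its multipliers are a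
nondegenerate weight for the underlying Reed–Solomon code. -/
lemma isLCDMDSCode_grs {F : Type} [Field F] [DecidableEq F] {n k : ℕ} (hk : k ≤ n)
    {a d : Fin n → F} (ha : Function.Injective a) (hd : ∀ i, d i ≠ 0)
    (h : WeightedNondeg ((Polynomial.degreeLT F k).map (grsMap a 1)) (fun i => d i * d i)) :
    IsLCDMDSCode k ((Polynomial.degreeLT F k).map (grsMap a d)) := by
  have hzero : ∀ p ∈ Polynomial.degreeLT F k, ∀ e : Fin n → F, (∀ i, e i ≠ 0) →
      grsMap a e p = 0 → p = 0 := by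
    intro p hp e he h0
    by_contra hp0
    have hlt := card_zeros_lt ha hp hp0
    have : (Finset.univ.filter fun i => p.eval (a i) = 0) = Finset.univ := by
      refine Finset.filter_true_of_mem fun i _ => ?_
      have := congrFun h0 i
      rw [grsMap_apply] at this
      exact (mul_eq_zero.1 this).resolve_left (he i)
    rw [this, Finset.card_univ, Fintype.card_fin] at hlt
    omega
  refine ⟨?_, ?_, ?_⟩
  · have hinj : Function.Injective ((grsMap a d).domRestrict (Polynomial.degreeLT F k)) := by
      rw [← LinearMap.ker_eq_bot, LinearMap.ker_eq_bot']
      rintro ⟨p, hp⟩ h0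
      exact Subtype.ext (hzero p hp d hd h0)
    rw [← LinearMap.range_domRestrict, LinearMap.finrank_range_of_inj hinj,
      (Polynomial.degreeLTEquiv F k).finrank_eq, Module.finrank_fin_fun]
  · rintro _ ⟨p, hp, rfl⟩ hx
    have hp0 : p = 0 := by
      refine hzero p hp 1 (by simp) (h _ ⟨p, hp, rfl⟩ ?_)
      rintro _ ⟨c, hc, rfl⟩
      rw [← hx _ ⟨c, hc, rfl⟩]
      refine Finset.sum_congr rfl fun i _ => ?_
      simp only [grsMap_apply, Pi.one_apply]
      ring
    rw [hp0, map_zero]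
  · rintro _ ⟨p, hp, rfl⟩ hx
    have hlt := card_zeros_lt ha hp (fun h0 => hx (by rw [h0, map_zero]))
    have hsum := Finset.card_filter_add_card_filter_not (s := (Finset.univ : Finset (Fin n)))
      (fun i => p.eval (a i) = 0)
    rw [Finset.card_univ, Fintype.card_fin] at hsum
    have heq : (Finset.univ.filter fun i => grsMap a d p i ≠ 0)
        = Finset.univ.filter fun i => ¬ p.eval (a i) = 0 := by
      ext i
      simp [grsMap_apply, hd i]
    rw [heq]
    omega

theorem stmt7 (r n : ℕ)
    (F : Type) [Field F] [Fintype F] [DecidableEq F]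
    (hcard : Fintype.card F = 2 ^ r)
    (hn3 : 3 ≤ n) (hnq : n ≤ 2 ^ r)
    (m : ℕ) (hm : 2 * m ≤ n) :
    ∃ C : Submodule F (Fin n → F), IsLCDMDSCode (n - 2 * m) C := by
  have hr : r ≠ 0 := by
    rintro rfl
    omega
  have hchar : ringChar F = 2 := by
    by_contra hne
    have hodd := FiniteField.odd_card_of_char_ne_two hne
    have : 2 ∣ 2 ^ r := dvd_pow_self 2 hr
    omega
  obtain ⟨a⟩ : Nonempty (Fin n ↪ F) :=
    Function.Embedding.nonempty_of_card_le (by rw [Fintype.card_fin]; omega)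
  -- A third element of `F` besides `0` and `1` supplies two distinct nonzero values.
  obtain ⟨s, hs⟩ : ∃ s : F, s ∉ ({0, 1} : Finset F) := by
    by_contra! hall
    have h1 := Finset.card_le_card (fun x _ => hall x : Finset.univ ⊆ ({0, 1} : Finset F))
    have h2 := Finset.card_le_two (a := (0 : F)) (b := 1)
    rw [Finset.card_univ] at h1
    omega
  simp only [Finset.mem_insert, Finset.mem_singleton, not_or] at hs
  obtain ⟨t, ht0, ht⟩ := (weightedNondeg_indicator (Nat.sub_le n (2 * m))
    a.injective).exists_ne_zero one_ne_zero hs.1 (Ne.symm hs.2)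
  choose d hd using fun i => FiniteField.isSquare_of_char_two hchar (t i)
  refine ⟨_, isLCDMDSCode_grs (Nat.sub_le n (2 * m)) (d := d) a.injective (fun i h0 => ?_) ?_⟩
  · exact ht0 i (by rw [hd i, h0, mul_zero])
  · rwa [← funext hd]
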